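/- arXiv:2305.04560 — 5 statements merged into one kernel-verified Lean document; each statement's English description precedes it below -/
import Mathlib

section
/- The scalar multiplication t ⊗_lt U = t⌊U⌋ + 𝔻(U)^t turns (L⁺_n, ⊕_lt) into a gyrovector space with trivial gyroautomorphisms: for all s, t ∈ ℝ and U ∈ L⁺_n one has t ⊗_lt U ∈ L⁺_n, 1 ⊗_lt U = U, 0 ⊗_lt U = I_n, (−1) ⊗_lt U = ⊖_lt U = −⌊U⌋ + 𝔻(U)⁻¹, (s+t) ⊗_lt U = (s ⊗_lt U) ⊕_lt (t ⊗_lt U), and (st) ⊗_lt U = s ⊗_lt (t ⊗_lt U). (Appendix C of the paper.) -/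
/-!
Every matrix involved is determined entrywise: strictly below the diagonal `⊗_lt` is ordinary scalar
multiplication and `⊕_lt` ordinary addition, while on the diagonal they are the real power and the
product of positive reals. The claims thus reduce to the vector space laws of `ℝ` below the diagonal
and to the laws `x ^ (s + t) = x ^ s * x ^ t`, `x ^ (s * t) = (x ^ t) ^ s` for `x > 0` on it;
`smulLT_apply` and `oplusLT_apply` provide the entrywise formulas.
-/

open Matrix

/-- `L⁺_n`: real lower triangular `n × n` matrices with positive diagonal entries. -/
def lowerPos {n : ℕ} (U : Matrix (Fin n) (Fin n) ℝ) : Prop :=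
  (∀ i j : Fin n, i < j → U i j = 0) ∧ ∀ i : Fin n, 0 < U i i

/-- `⌊U⌋`: the strictly lower triangular part of `U`. -/
def slt {n : ℕ} (U : Matrix (Fin n) (Fin n) ℝ) : Matrix (Fin n) (Fin n) ℝ :=
  Matrix.of fun i j => if j < i then U i j else 0

/-- `𝔻(U)`: the diagonal matrix with the same diagonal as `U`. -/
def dlt {n : ℕ} (U : Matrix (Fin n) (Fin n) ℝ) : Matrix (Fin n) (Fin n) ℝ :=
  Matrix.diagonal fun i => U i i

/-- The Log-Cholesky binary operation `U ⊕_lt V = ⌊U⌋ + ⌊V⌋ + 𝔻(U)𝔻(V)`. -/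
def oplusLT {n : ℕ} (U V : Matrix (Fin n) (Fin n) ℝ) : Matrix (Fin n) (Fin n) ℝ :=
  slt U + slt V + dlt U * dlt V

/-- The Log-Cholesky inverse `⊖_lt U = −⌊U⌋ + 𝔻(U)⁻¹`. -/
noncomputable def negLT {n : ℕ} (U : Matrix (Fin n) (Fin n) ℝ) : Matrix (Fin n) (Fin n) ℝ :=
  -slt U + Matrix.diagonal fun i => (U i i)⁻¹

/-- The Log-Cholesky scalar multiplication `t ⊗_lt U = t⌊U⌋ + 𝔻(U)^t`. -/
noncomputable def smulLT {n : ℕ} (t : ℝ) (U : Matrix (Fin n) (Fin n) ℝ) :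
    Matrix (Fin n) (Fin n) ℝ :=
  t • slt U + Matrix.diagonal fun i => (U i i) ^ t

/-- The Log-Cholesky inner product
`⟨U,V⟩_L = ⟨⌊U⌋,⌊V⌋⟩_F + Σ_i log(U i i)·log(V i i)`. -/
noncomputable def innerL {n : ℕ} (U V : Matrix (Fin n) (Fin n) ℝ) : ℝ :=
  Matrix.trace ((slt U)ᵀ * slt V) + ∑ i : Fin n, Real.log (U i i) * Real.log (V i i)

/-- The Log-Cholesky norm `∥U∥_L = ⟨U,U⟩_L^{1/2}`. -/
noncomputable def normL {n : ℕ} (U : Matrix (Fin n) (Fin n) ℝ) : ℝ :=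
  Real.sqrt (innerL U U)

theorem smulLT_apply {n : ℕ} (t : ℝ) (U : Matrix (Fin n) (Fin n) ℝ) (i j : Fin n) :
    smulLT t U i j = if j < i then t * U i j else if i = j then U i i ^ t else 0 := by
  rcases lt_trichotomy j i with h | rfl | h
  · simp [smulLT, slt, h, h.ne']
  · simp [smulLT, slt]
  · simp [smulLT, slt, h.not_gt, h.ne]

theorem oplusLT_apply {n : ℕ} (U V : Matrix (Fin n) (Fin n) ℝ) (i j : Fin n) :
    oplusLT U V i j =
      if j < i then U i j + V i j else if i = j then U i i * V i i else 0 := by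
  rcases lt_trichotomy j i with h | rfl | h
  · simp [oplusLT, slt, dlt, h, h.ne']
  · simp [oplusLT, slt, dlt]
  · simp [oplusLT, slt, dlt, h.not_gt, h.ne]

/-- The scalar multiplication `t ⊗_lt U = t⌊U⌋ + 𝔻(U)^t` turns
`(L⁺_n, ⊕_lt)` into a gyrovector space with trivial gyroautomorphisms:
closure, `1 ⊗_lt U = U`, `0 ⊗_lt U = I_n`, `(−1) ⊗_lt U = ⊖_lt U = −⌊U⌋ + 𝔻(U)⁻¹`,
`(s+t) ⊗_lt U = (s ⊗_lt U) ⊕_lt (t ⊗_lt U)`, and `(st) ⊗_lt U = s ⊗_lt (t ⊗_lt U)`. -/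
theorem smulLT_gyrovector_space {n : ℕ} (s t : ℝ) (U : Matrix (Fin n) (Fin n) ℝ)
    (hU : lowerPos U) :
    lowerPos (smulLT t U) ∧
    smulLT 1 U = U ∧
    smulLT 0 U = 1 ∧
    smulLT (-1) U = negLT U ∧
    negLT U = -slt U + Matrix.diagonal (fun i => (U i i)⁻¹) ∧
    smulLT (s + t) U = oplusLT (smulLT s U) (smulLT t U) ∧
    smulLT (s * t) U = smulLT s (smulLT t U) := by
  obtain ⟨hlow, hpos⟩ := hU
  refine ⟨⟨fun i j h => ?_, fun i => ?_⟩, ?_, ?_, ?_, rfl, ?_, ?_⟩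
  · simp [smulLT_apply, h.not_gt, h.ne]
  · simpa [smulLT_apply] using Real.rpow_pos_of_pos (hpos i) t
  · ext i j
    rcases lt_trichotomy j i with h | rfl | h
    · simp [smulLT_apply, h]
    · simp [smulLT_apply]
    · simp [smulLT_apply, h.not_gt, h.ne, hlow i j h]
  · simp [smulLT]
  · simp [smulLT, negLT, Real.rpow_neg_one]
  · ext i j
    rcases lt_trichotomy j i with h | rfl | h
    · simp [smulLT_apply, oplusLT_apply, h, add_mul]
    · simp [smulLT_apply, oplusLT_apply, Real.rpow_add (hpos j)]
    · simp [smulLT_apply, oplusLT_apply, h.not_gt, h.ne]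
  · ext i j
    rcases lt_trichotomy j i with h | rfl | h
    · simp [smulLT_apply, h, mul_assoc]
    · simp [smulLT_apply, mul_comm s t, Real.rpow_mul (hpos j).le]
    · simp [smulLT_apply, h.not_gt, h.ne]
end

section
/- Law of gyrocosines for the Log-Cholesky geometry: let P, Q, R ∈ L⁺_n be pairwise distinct, set P̃ = ⊖_lt Q ⊕_lt R, Q̃ = ⊖_lt P ⊕_lt R, R̃ = ⊖_lt P ⊕_lt Q, p = ∥P̃∥_L, q = ∥Q̃∥_L, r = ∥R̃∥_L, and cos α = ⟨R̃, Q̃⟩_L/(r·q) (the gyrocosine of the gyroangle at the vertex P; p, q, r are nonzero since the points are pairwise distinct). Then p² = q² + r² − 2·q·r·cos α. (Theorem 4.7 of the paper, the Law of SPD Gyrocosines, for the Log-Cholesky metric in Cholesky-factor coordinates.) -/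
/-!
The map sending `U ∈ L⁺_n` to its strictly lower triangular part and the logarithms of its diagonal
carries `⊖_lt U ⊕_lt V` to the difference of the images of `V` and `U` (`slt_diff`, `log_diff`), and
carries `⟨·,·⟩_L` to a Euclidean inner product. The claim is therefore the Euclidean law of cosines.
Since the map is injective on `L⁺_n`, distinct points have nonzero distance (`normL_diff_ne_zero`),
so the denominator in `cos α` cancels.
-/


open Matrix

lemma innerL_eq_sum {n : ℕ} (U V : Matrix (Fin n) (Fin n) ℝ) :
    innerL U V = ∑ i : Fin n, ((∑ j : Fin n, slt U j i * slt V j i) +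
      Real.log (U i i) * Real.log (V i i)) := by
  simp [innerL, Matrix.trace, Matrix.mul_apply, Finset.sum_add_distrib]

lemma innerL_self_nonneg {n : ℕ} (U : Matrix (Fin n) (Fin n) ℝ) : 0 ≤ innerL U U := by
  rw [innerL_eq_sum]
  exact Finset.sum_nonneg fun i _ =>
    add_nonneg (Finset.sum_nonneg fun j _ => mul_self_nonneg _) (mul_self_nonneg _)

lemma normL_sq {n : ℕ} (U : Matrix (Fin n) (Fin n) ℝ) : normL U ^ 2 = innerL U U :=
  Real.sq_sqrt (innerL_self_nonneg U)

lemma slt_diff {n : ℕ} (U V : Matrix (Fin n) (Fin n) ℝ) (i j : Fin n) :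
    slt (oplusLT (negLT U) V) i j = slt V i j - slt U i j := by
  by_cases h : j < i
  · simp [slt, oplusLT, negLT, dlt, h, h.ne']
    ring
  · simp [slt, h]

lemma log_diff {n : ℕ} {U V : Matrix (Fin n) (Fin n) ℝ} (hU : lowerPos U) (hV : lowerPos V)
    (i : Fin n) :
    Real.log (oplusLT (negLT U) V i i) = Real.log (V i i) - Real.log (U i i) := by
  have h : oplusLT (negLT U) V i i = (U i i)⁻¹ * V i i := by
    simp [slt, oplusLT, negLT, dlt]
  rw [h, Real.log_mul (inv_ne_zero (hU.2 i).ne') (hV.2 i).ne', Real.log_inv]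
  ring

lemma normL_diff_ne_zero {n : ℕ} {U V : Matrix (Fin n) (Fin n) ℝ} (hU : lowerPos U)
    (hV : lowerPos V) (hUV : U ≠ V) : normL (oplusLT (negLT U) V) ≠ 0 := by
  intro h0
  have h := normL_sq (oplusLT (negLT U) V)
  rw [h0, innerL_eq_sum, zero_pow two_ne_zero, eq_comm, Finset.sum_eq_zero_iff_of_nonneg
    fun i _ => add_nonneg (Finset.sum_nonneg fun j _ => mul_self_nonneg _) (mul_self_nonneg _)] at h
  apply hUV
  ext i j
  have hj := h j (Finset.mem_univ j)
  rw [add_eq_zero_iff_of_nonneg (Finset.sum_nonneg fun j _ => mul_self_nonneg _)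
    (mul_self_nonneg _), Finset.sum_eq_zero_iff_of_nonneg fun j _ => mul_self_nonneg _] at hj
  obtain ⟨hs, hl⟩ := hj
  rcases lt_trichotomy i j with hij | rfl | hij
  · rw [hU.1 i j hij, hV.1 i j hij]
  · have hlog := mul_self_eq_zero.mp hl
    rw [log_diff hU hV] at hlog
    exact Real.log_injOn_pos (hU.2 i) (hV.2 i) (sub_eq_zero.mp hlog).symm
  · have hij' := mul_self_eq_zero.mp (hs i (Finset.mem_univ i))
    rw [slt_diff] at hij'
    simpa [slt, hij] using (sub_eq_zero.mp hij').symm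

/-- The law of cosines in polarized form, without division by the norms. -/
lemma innerL_diff_self {n : ℕ} {P Q R : Matrix (Fin n) (Fin n) ℝ}
    (hP : lowerPos P) (hQ : lowerPos Q) (hR : lowerPos R) :
    innerL (oplusLT (negLT Q) R) (oplusLT (negLT Q) R) =
      innerL (oplusLT (negLT P) R) (oplusLT (negLT P) R) +
        innerL (oplusLT (negLT P) Q) (oplusLT (negLT P) Q) -
          2 * innerL (oplusLT (negLT P) Q) (oplusLT (negLT P) R) := by
  simp only [innerL_eq_sum, slt_diff, log_diff hP hQ, log_diff hP hR, log_diff hQ hR]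
  rw [Finset.mul_sum, ← Finset.sum_add_distrib, ← Finset.sum_sub_distrib]
  refine Finset.sum_congr rfl fun i _ => ?_
  have h : ∑ j, (slt R j i - slt Q j i) * (slt R j i - slt Q j i) =
      ∑ j, (slt R j i - slt P j i) * (slt R j i - slt P j i) +
        ∑ j, (slt Q j i - slt P j i) * (slt Q j i - slt P j i) -
          2 * ∑ j, (slt Q j i - slt P j i) * (slt R j i - slt P j i) := by
    rw [Finset.mul_sum, ← Finset.sum_add_distrib, ← Finset.sum_sub_distrib]
    exact Finset.sum_congr rfl fun j _ => by ring
  rw [h]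
  ring

/-- Law of gyrocosines for the Log-Cholesky geometry: with
`P̃ = ⊖_lt Q ⊕_lt R`, `Q̃ = ⊖_lt P ⊕_lt R`, `R̃ = ⊖_lt P ⊕_lt Q`, `p = ∥P̃∥_L`,
`q = ∥Q̃∥_L`, `r = ∥R̃∥_L`, and `cos α = ⟨R̃,Q̃⟩_L/(r·q)`, one has
`p² = q² + r² − 2qr·cos α`. -/
theorem law_of_gyrocosines_LC {n : ℕ} (P Q R : Matrix (Fin n) (Fin n) ℝ)
    (hP : lowerPos P) (hQ : lowerPos Q) (hR : lowerPos R)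
    (hPQ : P ≠ Q) (hPR : P ≠ R) (hQR : Q ≠ R) :
    (normL (oplusLT (negLT Q) R)) ^ 2 =
      (normL (oplusLT (negLT P) R)) ^ 2 + (normL (oplusLT (negLT P) Q)) ^ 2 -
        2 * normL (oplusLT (negLT P) R) * normL (oplusLT (negLT P) Q) *
          (innerL (oplusLT (negLT P) Q) (oplusLT (negLT P) R) /
            (normL (oplusLT (negLT P) Q) * normL (oplusLT (negLT P) R))) := by
  rw [normL_sq, normL_sq, normL_sq, innerL_diff_self hP hQ hR]
  have hq := normL_diff_ne_zero hP hR hPR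
  have hr := normL_diff_ne_zero hP hQ hPQ
  field_simp
end

section
/- Law of gyrosines for the Log-Cholesky geometry: let P, Q, R ∈ L⁺_n be pairwise distinct, set p = ∥⊖_lt Q ⊕_lt R∥_L, q = ∥⊖_lt P ⊕_lt R∥_L, r = ∥⊖_lt P ⊕_lt Q∥_L (all nonzero), and let cos α = ⟨⊖_lt P ⊕_lt Q, ⊖_lt P ⊕_lt R⟩_L/(r·q), cos β = ⟨⊖_lt Q ⊕_lt P, ⊖_lt Q ⊕_lt R⟩_L/(r·p), cos γ = ⟨⊖_lt R ⊕_lt P, ⊖_lt R ⊕_lt Q⟩_L/(q·p) be the gyrocosines of the gyroangles at the vertices P, Q, R, with sin α = √(1 − cos²α) and similarly for β, γ. Then sin α / p = sin β / q = sin γ / r. (Theorem H.1 of the paper, the Law of SPD Gyrosines, for the Log-Cholesky metric in Cholesky-factor coordinates.) -/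
/-!
The map `logVec` sends `U` to its strictly lower triangular entries together with the logarithms
of its diagonal entries. On `L⁺_n` it is injective, it turns `⊖_lt A ⊕_lt B` into the difference
`logVec B - logVec A`, and it turns `⟨·,·⟩_L` into the Euclidean inner product. The claim is thus
the Euclidean law of sines for the triangle with vertices `logVec P`, `logVec Q`, `logVec R`: each
of the three quotients equals `√G / (p * q * r)`, where `G` is the Gram determinant of two sides,
which does not depend on the vertex the sides emanate from.
-/


open Matrix

/-- Log-Cholesky coordinates of `U`: the entries of `⌊U⌋` below the diagonal, `log (U i i)` on the
diagonal, and `0` above it. -/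
noncomputable def logVec {n : ℕ} (U : Matrix (Fin n) (Fin n) ℝ) :
    EuclideanSpace ℝ (Fin n × Fin n) :=
  WithLp.toLp 2 fun x =>
    if x.2 < x.1 then U x.1 x.2 else if x.1 = x.2 then Real.log (U x.1 x.1) else 0

lemma innerL_eq_inner {n : ℕ} (U V : Matrix (Fin n) (Fin n) ℝ) :
    innerL U V = inner ℝ (logVec U) (logVec V) := by
  have hdiag : ∑ i : Fin n, Real.log (U i i) * Real.log (V i i) =
      ∑ i : Fin n, ∑ j : Fin n,
        if i = j then Real.log (U i i) * Real.log (V i i) else 0 := by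
    simp
  have htrace : Matrix.trace ((slt U)ᵀ * slt V) =
      ∑ i : Fin n, ∑ j : Fin n, slt U i j * slt V i j := by
    simp only [Matrix.trace, Matrix.diag, Matrix.mul_apply, Matrix.transpose_apply]
    exact Finset.sum_comm
  rw [innerL, hdiag, htrace, PiLp.inner_apply, Fintype.sum_prod_type, ← Finset.sum_add_distrib]
  refine Finset.sum_congr rfl fun i _ => ?_
  rw [← Finset.sum_add_distrib]
  refine Finset.sum_congr rfl fun j _ => ?_
  rcases lt_trichotomy j i with h | h | h
  · simp [logVec, slt, h, h.ne', mul_comm]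
  · simp [logVec, slt, h, mul_comm]
  · simp [logVec, slt, h.not_gt, h.ne]

lemma logVec_oplusLT_negLT {n : ℕ} {A B : Matrix (Fin n) (Fin n) ℝ}
    (hA : lowerPos A) (hB : lowerPos B) :
    logVec (oplusLT (negLT A) B) = logVec B - logVec A := by
  ext ⟨i, j⟩
  rcases lt_trichotomy j i with h | h | h
  · simp [logVec, oplusLT, negLT, slt, dlt, h, h.ne']
    ring
  · subst h
    have hA' := (hA.2 j).ne'
    have hB' := (hB.2 j).ne'
    simp [logVec, oplusLT, negLT, slt, dlt, Real.log_mul, hA', hB']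
    ring
  · simp [logVec, h.not_gt, h.ne]

lemma logVec_injOn {n : ℕ} {A B : Matrix (Fin n) (Fin n) ℝ}
    (hA : lowerPos A) (hB : lowerPos B) (h : logVec A = logVec B) : A = B := by
  ext i j
  have hij : logVec A (i, j) = logVec B (i, j) := by rw [h]
  rcases lt_trichotomy j i with hlt | heq | hgt
  · simpa [logVec, hlt] using hij
  · subst heq
    exact Real.log_injOn_pos (hA.2 j) (hB.2 j) (by simpa [logVec] using hij)
  · rw [hA.1 i j hgt, hB.1 i j hgt]

lemma normL_eq_norm {n : ℕ} (U : Matrix (Fin n) (Fin n) ℝ) : normL U = ‖logVec U‖ := by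
  rw [normL, innerL_eq_inner, real_inner_self_eq_norm_sq, Real.sqrt_sq (norm_nonneg _)]

/-- Clears the denominator in `sin = √(1 - cos²)`; the numerator on the right is the square root
of a Gram determinant when `x`, `y` are side lengths and `c` is their inner product. -/
lemma sqrt_one_sub_div_sq {x y : ℝ} (hx : 0 < x) (hy : 0 < y) (c : ℝ) :
    Real.sqrt (1 - (c / (x * y)) ^ 2) = Real.sqrt (x ^ 2 * y ^ 2 - c ^ 2) / (x * y) := by
  have hxy : 0 < x * y := mul_pos hx hy
  have h : 1 - (c / (x * y)) ^ 2 = (x ^ 2 * y ^ 2 - c ^ 2) / (x * y) ^ 2 := by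
    field_simp
  rw [h, Real.sqrt_div' _ (sq_nonneg _), Real.sqrt_sq hxy.le]

/-- Law of gyrosines for the Log-Cholesky geometry: with
`p = ∥⊖_lt Q ⊕_lt R∥_L`, `q = ∥⊖_lt P ⊕_lt R∥_L`, `r = ∥⊖_lt P ⊕_lt Q∥_L`, the
gyrocosines `cos α`, `cos β`, `cos γ` of the gyroangles at the vertices `P`, `Q`, `R`,
and `sin = √(1 − cos²)`, one has `sin α / p = sin β / q = sin γ / r`. -/
theorem law_of_gyrosines_LC {n : ℕ} (P Q R : Matrix (Fin n) (Fin n) ℝ)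
    (hP : lowerPos P) (hQ : lowerPos Q) (hR : lowerPos R)
    (hPQ : P ≠ Q) (hPR : P ≠ R) (hQR : Q ≠ R) :
    Real.sqrt (1 - (innerL (oplusLT (negLT P) Q) (oplusLT (negLT P) R) /
          (normL (oplusLT (negLT P) Q) * normL (oplusLT (negLT P) R))) ^ 2) /
        normL (oplusLT (negLT Q) R) =
      Real.sqrt (1 - (innerL (oplusLT (negLT Q) P) (oplusLT (negLT Q) R) /
          (normL (oplusLT (negLT P) Q) * normL (oplusLT (negLT Q) R))) ^ 2) /
        normL (oplusLT (negLT P) R) ∧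
    Real.sqrt (1 - (innerL (oplusLT (negLT Q) P) (oplusLT (negLT Q) R) /
          (normL (oplusLT (negLT P) Q) * normL (oplusLT (negLT Q) R))) ^ 2) /
        normL (oplusLT (negLT P) R) =
      Real.sqrt (1 - (innerL (oplusLT (negLT R) P) (oplusLT (negLT R) Q) /
          (normL (oplusLT (negLT P) R) * normL (oplusLT (negLT Q) R))) ^ 2) /
        normL (oplusLT (negLT P) Q) := by
  have hu : 0 < ‖logVec Q - logVec P‖ :=
    norm_pos_iff.2 (sub_ne_zero.2 fun h => hPQ (logVec_injOn hP hQ h.symm))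
  have hv : 0 < ‖logVec R - logVec P‖ :=
    norm_pos_iff.2 (sub_ne_zero.2 fun h => hPR (logVec_injOn hP hR h.symm))
  have hw : 0 < ‖logVec R - logVec Q‖ :=
    norm_pos_iff.2 (sub_ne_zero.2 fun h => hQR (logVec_injOn hQ hR h.symm))
  simp only [normL_eq_norm, innerL_eq_inner, logVec_oplusLT_negLT hP hQ,
    logVec_oplusLT_negLT hP hR, logVec_oplusLT_negLT hQ hP, logVec_oplusLT_negLT hQ hR,
    logVec_oplusLT_negLT hR hP, logVec_oplusLT_negLT hR hQ]
  rw [sqrt_one_sub_div_sq hu hv, sqrt_one_sub_div_sq hu hw, sqrt_one_sub_div_sq hv hw]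
  -- The Gram determinants at `Q` and `R` agree with the one at `P`.
  have hQ_gram : ‖logVec Q - logVec P‖ ^ 2 * ‖logVec R - logVec Q‖ ^ 2 -
      inner ℝ (logVec P - logVec Q) (logVec R - logVec Q) ^ 2 =
      ‖logVec Q - logVec P‖ ^ 2 * ‖logVec R - logVec P‖ ^ 2 -
      inner ℝ (logVec Q - logVec P) (logVec R - logVec P) ^ 2 := by
    simp only [← real_inner_self_eq_norm_sq, inner_sub_left, inner_sub_right,
      real_inner_comm (logVec P) (logVec Q), real_inner_comm (logVec P) (logVec R),
      real_inner_comm (logVec Q) (logVec R)]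
    ring
  have hR_gram : ‖logVec R - logVec P‖ ^ 2 * ‖logVec R - logVec Q‖ ^ 2 -
      inner ℝ (logVec P - logVec R) (logVec Q - logVec R) ^ 2 =
      ‖logVec Q - logVec P‖ ^ 2 * ‖logVec R - logVec P‖ ^ 2 -
      inner ℝ (logVec Q - logVec P) (logVec R - logVec P) ^ 2 := by
    simp only [← real_inner_self_eq_norm_sq, inner_sub_left, inner_sub_right,
      real_inner_comm (logVec P) (logVec Q), real_inner_comm (logVec P) (logVec R),
      real_inner_comm (logVec Q) (logVec R)]
    ring
  rw [hQ_gram, hR_gram]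
  constructor <;> field_simp
end

section
/- Gyroangles are constant along gyrolines in the Log-Cholesky geometry: let P, Q, R ∈ L⁺_n with Q ≠ P and R ≠ P, let t > 0, and set S = P ⊕_lt (t ⊗_lt (⊖_lt P ⊕_lt Q)) (a point of the gyroline through P and Q). Then ⟨⊖_lt P ⊕_lt R, ⊖_lt P ⊕_lt S⟩_L / (∥⊖_lt P ⊕_lt R∥_L · ∥⊖_lt P ⊕_lt S∥_L) = ⟨⊖_lt P ⊕_lt R, ⊖_lt P ⊕_lt Q⟩_L / (∥⊖_lt P ⊕_lt R∥_L · ∥⊖_lt P ⊕_lt Q∥_L); i.e., the gyrocosine of the gyroangle ∠RPS equals that of ∠RPQ. (The Log-Cholesky instance of Lemma O.2 in the proof of Theorem 4.9 of the paper.) -/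
/-!
The map `U ↦ (⌊U⌋, (log U i i)_i)` carries the Log-Cholesky operations to the vector space
operations and `⟨·,·⟩_L` to a Euclidean inner product. By left cancellation, `⊖P ⊕ S` is
`t ⊗ (⊖P ⊕ Q)`, whose coordinates are `t` times those of `⊖P ⊕ Q` (`slt_gyroline`,
`log_diag_gyroline`). Hence the inner product and the norm (as `t > 0`) are both multiplied by `t`
(`innerL_of_scaled`, `normL_of_scaled`), and this factor cancels in the quotient.
-/

open Matrix

lemma slt_oplusLT {n : ℕ} (U V : Matrix (Fin n) (Fin n) ℝ) :
    slt (oplusLT U V) = slt U + slt V := by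
  ext i j
  by_cases h : j < i
  · simp [slt, oplusLT, dlt, h, h.ne']
  · simp [slt, h]

lemma slt_negLT {n : ℕ} (U : Matrix (Fin n) (Fin n) ℝ) : slt (negLT U) = -slt U := by
  ext i j
  by_cases h : j < i
  · simp [slt, negLT, h, h.ne']
  · simp [slt, h]

lemma slt_smulLT {n : ℕ} (t : ℝ) (U : Matrix (Fin n) (Fin n) ℝ) :
    slt (smulLT t U) = t • slt U := by
  ext i j
  by_cases h : j < i
  · simp [slt, smulLT, h, h.ne']
  · simp [slt, h]

lemma oplusLT_diag {n : ℕ} (U V : Matrix (Fin n) (Fin n) ℝ) (i : Fin n) :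
    oplusLT U V i i = U i i * V i i := by
  simp [oplusLT, slt, dlt]

lemma negLT_diag {n : ℕ} (U : Matrix (Fin n) (Fin n) ℝ) (i : Fin n) :
    negLT U i i = (U i i)⁻¹ := by
  simp [negLT, slt]

lemma smulLT_diag {n : ℕ} (t : ℝ) (U : Matrix (Fin n) (Fin n) ℝ) (i : Fin n) :
    smulLT t U i i = (U i i) ^ t := by
  simp [smulLT, slt]

lemma slt_gyroline {n : ℕ} (P V : Matrix (Fin n) (Fin n) ℝ) (t : ℝ) :
    slt (oplusLT (negLT P) (oplusLT P (smulLT t V))) = t • slt V := by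
  rw [slt_oplusLT, slt_oplusLT, slt_negLT, slt_smulLT, neg_add_cancel_left]

lemma log_diag_gyroline {n : ℕ} {P V : Matrix (Fin n) (Fin n) ℝ} (hP : lowerPos P)
    (hV : ∀ i, 0 < V i i) (t : ℝ) (i : Fin n) :
    Real.log ((oplusLT (negLT P) (oplusLT P (smulLT t V))) i i) = t * Real.log (V i i) := by
  rw [oplusLT_diag, oplusLT_diag, negLT_diag, smulLT_diag, inv_mul_cancel_left₀ (hP.2 i).ne',
    Real.log_rpow (hV i)]

lemma innerL_of_scaled {n : ℕ} (U : Matrix (Fin n) (Fin n) ℝ)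
    {V W : Matrix (Fin n) (Fin n) ℝ} {t : ℝ} (hs : slt W = t • slt V)
    (hd : ∀ i, Real.log (W i i) = t * Real.log (V i i)) :
    innerL U W = t * innerL U V := by
  simp only [innerL, hs, hd, Matrix.mul_smul, Matrix.trace_smul, smul_eq_mul, mul_add,
    Finset.mul_sum, mul_left_comm]

lemma normL_of_scaled {n : ℕ} {V W : Matrix (Fin n) (Fin n) ℝ} {t : ℝ} (ht : 0 ≤ t)
    (hs : slt W = t • slt V) (hd : ∀ i, Real.log (W i i) = t * Real.log (V i i)) :
    normL W = t * normL V := by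
  have h : innerL W W = t ^ 2 * innerL V V := by
    simp only [innerL, hs, hd, Matrix.transpose_smul, Matrix.smul_mul, Matrix.mul_smul,
      Matrix.trace_smul, smul_eq_mul, mul_add, Finset.mul_sum]
    congr 1
    · ring
    · exact Finset.sum_congr rfl fun i _ => by ring
  rw [normL, h, Real.sqrt_mul (sq_nonneg t), Real.sqrt_sq ht, normL]

/-- Gyroangles are constant along gyrolines in the Log-Cholesky
geometry: for `t > 0` and `S = P ⊕_lt (t ⊗_lt (⊖_lt P ⊕_lt Q))`, the gyrocosine of
the gyroangle `∠RPS` equals that of `∠RPQ`. -/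
theorem gyroangle_along_gyroline_LC {n : ℕ} (P Q R : Matrix (Fin n) (Fin n) ℝ)
    (hP : lowerPos P) (hQ : lowerPos Q) (hR : lowerPos R)
    (hQP : Q ≠ P) (hRP : R ≠ P) (t : ℝ) (ht : 0 < t) :
    innerL (oplusLT (negLT P) R)
        (oplusLT (negLT P) (oplusLT P (smulLT t (oplusLT (negLT P) Q)))) /
      (normL (oplusLT (negLT P) R) *
        normL (oplusLT (negLT P) (oplusLT P (smulLT t (oplusLT (negLT P) Q))))) =
    innerL (oplusLT (negLT P) R) (oplusLT (negLT P) Q) /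
      (normL (oplusLT (negLT P) R) * normL (oplusLT (negLT P) Q)) := by
  have hV : ∀ i, 0 < (oplusLT (negLT P) Q) i i := fun i => by
    rw [oplusLT_diag, negLT_diag]
    exact mul_pos (inv_pos.2 (hP.2 i)) (hQ.2 i)
  have hs := slt_gyroline P (oplusLT (negLT P) Q) t
  have hd := log_diag_gyroline hP hV t
  rw [innerL_of_scaled _ hs hd, normL_of_scaled ht.le hs hd, mul_left_comm,
    mul_div_mul_left _ _ ht.ne']
end

section
/- Let ψ : L⁺_n → T_n be the map ψ(U) = ⌊U⌋ + log 𝔻(U), where log 𝔻(U) is the diagonal matrix with entries log(U i i) and T_n is the space of n×n real lower triangular matrices. Let P, X ∈ L⁺_n and let B ∈ T_n with B ≠ 0. Then the infimum of ∥ψ(X) − ψ(Q)∥_F over all Q ∈ L⁺_n satisfying ⟨ψ(Q) − ψ(P), B⟩_F = 0 equals |⟨ψ(X) − ψ(P), B⟩_F| / ∥B∥_F, and this infimum is attained. (Theorem 4.10 of the paper, the SPD gyrodistance from a SPD matrix to a SPD hypergyroplane in a Log-Cholesky gyrovector space, expressed in Cholesky-factor coordinates: the Log-Cholesky gyrodistance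 satisfies ∥⊖_lt Q ⊕_lt X∥_L = ∥ψ(X) − ψ(Q)∥_F, and B corresponds to ⌊W̃⌋ + 𝔻(φ(P))⁻¹𝔻(W̃).) -/
/-!
The map `ψ` is a bijection from `L⁺_n` onto `T_n` (`psiLT_expLT` gives the inverse), so in the
coordinate `ψ(Q)` the statement is the distance from a point to a hyperplane in the Euclidean
space `T_n`. With `Y = ψ(X) - ψ(P)`, the constraint gives `⟨ψ(X) - ψ(Q), B⟩ = ⟨Y, B⟩`, and the
lower bound is Cauchy–Schwarz (`abs_frobInner_le`). It is attained at the orthogonal projection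
`ψ(Q) = ψ(X) - (⟨Y, B⟩ / ⟨B, B⟩) B`, which lies in `T_n` because `B` does.
-/

open Matrix

/-- `ψ(U) = ⌊U⌋ + log 𝔻(U)`, mapping `L⁺_n` into the space `T_n` of lower
triangular matrices. -/
noncomputable def psiLT {n : ℕ} (U : Matrix (Fin n) (Fin n) ℝ) :
    Matrix (Fin n) (Fin n) ℝ :=
  slt U + Matrix.diagonal fun i => Real.log (U i i)

/-- The Frobenius inner product `⟨A,B⟩_F = tr(AᵀB)`. -/
noncomputable def frobInner {n : ℕ} (A B : Matrix (Fin n) (Fin n) ℝ) : ℝ :=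
  Matrix.trace (Aᵀ * B)

/-- The Frobenius norm `∥A∥_F`. -/
noncomputable def frobNorm {n : ℕ} (A : Matrix (Fin n) (Fin n) ℝ) : ℝ :=
  Real.sqrt (Matrix.trace (Aᵀ * A))

/-- The inverse of `ψ`: exponentiate the diagonal and keep the strictly lower part. -/
noncomputable def expLT {n : ℕ} (T : Matrix (Fin n) (Fin n) ℝ) : Matrix (Fin n) (Fin n) ℝ :=
  slt T + Matrix.diagonal fun i => Real.exp (T i i)

lemma lowerPos_expLT {n : ℕ} (T : Matrix (Fin n) (Fin n) ℝ) : lowerPos (expLT T) := by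
  refine ⟨fun i j hij => ?_, fun i => ?_⟩
  · simp [expLT, slt, hij.ne, hij.le]
  · simp [expLT, slt, Real.exp_pos]

lemma psiLT_expLT {n : ℕ} (T : Matrix (Fin n) (Fin n) ℝ)
    (hT : ∀ i j : Fin n, i < j → T i j = 0) : psiLT (expLT T) = T := by
  ext i j
  rcases lt_trichotomy i j with h | rfl | h
  · simp [psiLT, slt, h.ne, h.le, hT i j h]
  · simp [psiLT, expLT, slt]
  · simp [psiLT, expLT, slt, h, h.ne']

lemma psiLT_upper {n : ℕ} (U : Matrix (Fin n) (Fin n) ℝ) (i j : Fin n) (h : i < j) :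
    psiLT U i j = 0 := by
  simp [psiLT, slt, h.ne, h.le]

lemma frobInner_eq_sum {n : ℕ} (A B : Matrix (Fin n) (Fin n) ℝ) :
    frobInner A B = ∑ p : Fin n × Fin n, A p.2 p.1 * B p.2 p.1 := by
  simp [frobInner, Matrix.trace, Matrix.mul_apply, Fintype.sum_prod_type]

lemma frobInner_sub_left {n : ℕ} (A A' B : Matrix (Fin n) (Fin n) ℝ) :
    frobInner (A - A') B = frobInner A B - frobInner A' B := by
  simp [frobInner, Matrix.sub_mul]

lemma frobInner_smul_left {n : ℕ} (c : ℝ) (A B : Matrix (Fin n) (Fin n) ℝ) :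
    frobInner (c • A) B = c * frobInner A B := by
  simp [frobInner]

lemma frobInner_self_pos {n : ℕ} {B : Matrix (Fin n) (Fin n) ℝ} (hB0 : B ≠ 0) :
    0 < frobInner B B := by
  obtain ⟨i, j, hij⟩ : ∃ i j, B i j ≠ 0 := by
    by_contra! h
    exact hB0 (Matrix.ext h)
  rw [frobInner_eq_sum]
  exact Finset.sum_pos' (fun p _ => mul_self_nonneg _)
    ⟨(j, i), Finset.mem_univ _, mul_self_pos.2 hij⟩

lemma frobNorm_smul {n : ℕ} (c : ℝ) (B : Matrix (Fin n) (Fin n) ℝ) :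
    frobNorm (c • B) = |c| * frobNorm B := by
  have h : Matrix.trace ((c • B)ᵀ * (c • B)) = c ^ 2 * Matrix.trace (Bᵀ * B) := by
    simp
    ring
  rw [frobNorm, h, Real.sqrt_mul (sq_nonneg c), Real.sqrt_sq_eq_abs, frobNorm]

/-- Cauchy–Schwarz for the Frobenius inner product. -/
lemma abs_frobInner_le {n : ℕ} (A B : Matrix (Fin n) (Fin n) ℝ) :
    |frobInner A B| ≤ frobNorm A * frobNorm B := by
  have hA : (0 : ℝ) ≤ frobInner A A := by
    rw [frobInner_eq_sum]
    exact Finset.sum_nonneg fun p _ => mul_self_nonneg _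
  change _ ≤ √(frobInner A A) * √(frobInner B B)
  rw [← Real.sqrt_mul hA]
  apply Real.abs_le_sqrt
  simp only [frobInner_eq_sum, ← pow_two]
  exact Finset.sum_mul_sq_le_sq_mul_sq _ _ _

/-- For `P, X ∈ L⁺_n` and a nonzero lower triangular `B ∈ T_n`, the
infimum of `∥ψ(X) − ψ(Q)∥_F` over all `Q ∈ L⁺_n` with `⟨ψ(Q) − ψ(P), B⟩_F = 0` equals
`|⟨ψ(X) − ψ(P), B⟩_F| / ∥B∥_F`, and this infimum is attained. -/
theorem dist_to_hypergyroplane_LC {n : ℕ} (P X B : Matrix (Fin n) (Fin n) ℝ)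
    (hP : lowerPos P) (hX : lowerPos X)
    (hB : ∀ i j : Fin n, i < j → B i j = 0) (hB0 : B ≠ 0) :
    IsLeast
      {d : ℝ | ∃ Q : Matrix (Fin n) (Fin n) ℝ, lowerPos Q ∧
        frobInner (psiLT Q - psiLT P) B = 0 ∧ d = frobNorm (psiLT X - psiLT Q)}
      (|frobInner (psiLT X - psiLT P) B| / frobNorm B) := by
  have hBB := frobInner_self_pos hB0
  have hBn : 0 < frobNorm B := Real.sqrt_pos.2 hBB
  have hsq : frobInner B B = frobNorm B * frobNorm B := (Real.mul_self_sqrt hBB.le).symm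
  constructor
  · set c := frobInner (psiLT X - psiLT P) B / frobInner B B with hc
    have hψ : psiLT (expLT (psiLT X - c • B)) = psiLT X - c • B :=
      psiLT_expLT _ fun i j h => by simp [psiLT_upper X i j h, hB i j h]
    refine ⟨expLT (psiLT X - c • B), lowerPos_expLT _, ?_, ?_⟩
    · rw [hψ, sub_right_comm, frobInner_sub_left, frobInner_smul_left, hc,
        div_mul_cancel₀ _ hBB.ne', sub_self]
    · rw [hψ, sub_sub_cancel, frobNorm_smul, hc, abs_div, abs_of_pos hBB, hsq]
      field_simp
  · rintro d ⟨Q, -, hQ, rfl⟩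
    have h : frobInner (psiLT X - psiLT P) B = frobInner (psiLT X - psiLT Q) B := by
      rw [frobInner_sub_left] at hQ ⊢
      rw [frobInner_sub_left]
      linarith
    rw [div_le_iff₀ hBn, h]
    exact abs_frobInner_le _ _
end
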